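/- arXiv:0708.3430 — 2 statements merged into one kernel-verified Lean document; each statement's English description precedes it below -/
import Mathlib

section
/- For a function x : Ĩ → ℝ one has Σ_{i,j∈Ĩ} x_i x_j (2δ_{ij} − c_{ij}) = 0 if and only if there exists a real number c such that x_i = c · d_i for all i ∈ Ĩ (i.e. x is a real multiple of the vector of dimensions of the irreducible representations, which records the regular representation of G). -/
open scoped BigOperators
open CategoryTheory Matrix

/-!
For a faithful representation `σ` of dimension `n`, the form `Σ x_i x_j (n δ_ij - c_ij)` is the
average over `g ∈ G` of `(n - Re χ_σ(g)) * |Σ x_i χ_i(g)|²`. The trace of `σ g` is a sum of `n`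
roots of unity, so every term is nonnegative and the first factor vanishes only at `g = 1`. Hence
the form vanishes at `x` exactly when the class function `Σ x_i χ_i` is supported at `1`, that is,
when it is a multiple of the regular character `Σ d_i χ_i`.
-/

universe u

section FiniteOrderEndomorphisms

theorem trace_eq_sum_of_basis_eigenvectors {R M ι : Type*} [CommRing R] [AddCommGroup M]
    [Module R M] [Fintype ι] (b : Module.Basis ι R M) {f : Module.End R M} {μ : ι → R}
    (h : ∀ i, f (b i) = μ i • b i) : LinearMap.trace R M f = ∑ i, μ i := by
  classical
  simp [LinearMap.trace_eq_matrix_trace R b, Matrix.trace, LinearMap.toMatrix_apply, h]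

section Field

variable {K V : Type*} [Field K] [AddCommGroup V] [Module K V] {f : Module.End K V}

theorem isSemisimple_of_isOfFinOrder [CharZero K] (hf : IsOfFinOrder f) : f.IsSemisimple := by
  obtain ⟨n, hn, hfn⟩ := isOfFinOrder_iff_pow_eq_one.1 hf
  refine Module.End.isSemisimple_of_squarefree_aeval_eq_zero (p := Polynomial.X ^ n - 1)
    (Polynomial.X_pow_sub_one_separable_iff.2 ?_).squarefree ?_
  · exact_mod_cast hn.ne'
  · simp [hfn]

theorem isOfFinOrder_of_hasEigenvector (hf : IsOfFinOrder f) {μ : K} {v : V}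
    (hv : f.HasEigenvector μ v) : IsOfFinOrder μ := by
  obtain ⟨n, hn, hfn⟩ := isOfFinOrder_iff_pow_eq_one.1 hf
  refine isOfFinOrder_iff_pow_eq_one.2 ⟨n, hn, smul_left_injective K hv.2 ?_⟩
  simp [← hv.pow_apply n, hfn]

theorem exists_basis_eigenvectors_of_isOfFinOrder [FiniteDimensional K V] [IsAlgClosed K]
    [CharZero K] (hf : IsOfFinOrder f) :
    ∃ (b : Module.Basis (Fin (Module.finrank K V)) K V) (μ : Fin (Module.finrank K V) → K),
      ∀ i, f (b i) = μ i • b i ∧ IsOfFinOrder (μ i) := by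
  classical
  have hint : DirectSum.IsInternal fun μ => f.eigenspace μ :=
    (DirectSum.isInternal_submodule_iff_iSupIndep_and_iSup_eq_top _).2
      ⟨f.eigenspaces_iSupIndep, (isSemisimple_of_isOfFinOrder hf).iSup_eigenspace_eq_top⟩
  let c := hint.collectedBasis fun μ => Module.finBasis K (f.eigenspace μ)
  let e := c.indexEquiv (Module.finBasis K V)
  have hc : ∀ i, f.HasEigenvector i.1 (c i) := fun i =>
    ⟨hint.collectedBasis_mem _ i, c.ne_zero i⟩
  refine ⟨c.reindex e, fun i => (e.symm i).1, fun i => ?_⟩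
  rw [Module.Basis.reindex_apply]
  exact ⟨(hc _).apply_eq_smul, isOfFinOrder_of_hasEigenvector hf (hc _)⟩

end Field

section Complex

variable {V : Type*} [AddCommGroup V] [Module ℂ V] [FiniteDimensional ℂ V] {f : Module.End ℂ V}

theorem trace_eq_conj_trace_of_mul_eq_one (hf : IsOfFinOrder f) {g : Module.End ℂ V}
    (hgf : g * f = 1) : LinearMap.trace ℂ V g = (starRingEnd ℂ) (LinearMap.trace ℂ V f) := by
  obtain ⟨b, μ, hb⟩ := exists_basis_eigenvectors_of_isOfFinOrder hf
  have hg : ∀ i, g (b i) = (starRingEnd ℂ) (μ i) • b i := fun i => by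
    have hμ : (starRingEnd ℂ) (μ i) * μ i = 1 := by
      rw [Complex.conj_mul', (hb i).2.norm_eq_one, Complex.ofReal_one, one_pow]
    calc g (b i) = g (((starRingEnd ℂ) (μ i) * μ i) • b i) := by rw [hμ, one_smul]
      _ = (starRingEnd ℂ) (μ i) • (g * f) (b i) := by
        rw [Module.End.mul_apply, (hb i).1, map_smul, map_smul, mul_smul]
      _ = (starRingEnd ℂ) (μ i) • b i := by rw [hgf, Module.End.one_apply]
  rw [trace_eq_sum_of_basis_eigenvectors b fun i => (hb i).1,
    trace_eq_sum_of_basis_eigenvectors b hg, map_sum]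

theorem re_trace_le_finrank_of_isOfFinOrder (hf : IsOfFinOrder f) :
    (LinearMap.trace ℂ V f).re ≤ Module.finrank ℂ V := by
  obtain ⟨b, μ, hb⟩ := exists_basis_eigenvectors_of_isOfFinOrder hf
  rw [trace_eq_sum_of_basis_eigenvectors b fun i => (hb i).1, Complex.re_sum]
  simpa using Finset.sum_le_card_nsmul Finset.univ (fun i => (μ i).re) 1
    fun i _ => (hb i).2.norm_eq_one ▸ Complex.re_le_norm (μ i)

theorem re_trace_eq_finrank_iff_of_isOfFinOrder (hf : IsOfFinOrder f) :
    (LinearMap.trace ℂ V f).re = Module.finrank ℂ V ↔ f = 1 := by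
  refine ⟨fun h => ?_, fun h => by simp [h]⟩
  obtain ⟨b, μ, hb⟩ := exists_basis_eigenvectors_of_isOfFinOrder hf
  have hre_le : ∀ i ∈ Finset.univ, (μ i).re ≤ 1 := fun i _ =>
    (hb i).2.norm_eq_one ▸ Complex.re_le_norm (μ i)
  have hsum : ∑ i, (μ i).re = ∑ _ : Fin (Module.finrank ℂ V), (1 : ℝ) := by
    rw [← Complex.re_sum, ← trace_eq_sum_of_basis_eigenvectors b fun i => (hb i).1]
    simpa using h
  have hμ : ∀ i, μ i = 1 := fun i => by
    have hre := (Finset.sum_eq_sum_iff_of_le hre_le).1 hsum i (Finset.mem_univ i)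
    exact Complex.ext hre (Complex.re_eq_norm.1 (hre.trans (hb i).2.norm_eq_one.symm)).2.symm
  exact b.ext fun i => by rw [(hb i).1, hμ, one_smul, Module.End.one_apply]

end Complex

end FiniteOrderEndomorphisms

section CompleteReducibility

theorem exists_nontrivial_mono_of_not_simple {C : Type*} [Category C] [Abelian C] {X : C}
    (hX : ¬ Limits.IsZero X) (hsimple : ¬ Simple X) :
    ∃ (Y : C) (f : Y ⟶ X), Mono f ∧ ¬ Limits.IsZero Y ∧ ¬ Limits.IsZero (Limits.cokernel f) := by
  contrapose! hsimple
  refine ⟨fun {Y} f _ => ⟨fun _ hf => hX ?_, fun hf => ?_⟩⟩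
  · exact ((Limits.isIsoZero_iff_source_target_isZero Y X).1 (hf ▸ inferInstance)).2
  · have hcoker := hsimple Y f inferInstance fun hY => hf (hY.eq_of_src f 0)
    have : Epi f := Preadditive.epi_of_isZero_cokernel f hcoker
    exact isIso_of_mono_of_epi f

section Monoid

variable {k G : Type*} [Field k] [Monoid G]

theorem isZero_iff_finrank_eq_zero {V : FDRep k G} :
    Limits.IsZero V ↔ Module.finrank k V = 0 := by
  rw [Module.finrank_zero_iff]
  refine ⟨fun h => ?_, fun h => (Limits.IsZero.iff_id_eq_zero V).2 ?_⟩
  · have hid : (LinearMap.id : V →ₗ[k] V) = 0 :=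
      congrArg (fun f : V ⟶ V => f.hom.hom.hom) (h.eq_of_src (𝟙 V) 0)
    exact subsingleton_of_forall_eq 0 fun a => LinearMap.congr_fun hid a
  · refine Action.Hom.ext (InducedCategory.hom_ext (ModuleCat.hom_ext ?_))
    exact LinearMap.ext fun v => Subsingleton.elim (α := V) _ _

theorem character_eq_trace_of_retract {V W : FDRep k G} {i : W ⟶ V} {p : V ⟶ W}
    (h : i ≫ p = 𝟙 W) (g : G) :
    W.character g = LinearMap.trace k V (V.ρ g ∘ₗ i.hom.hom.hom ∘ₗ p.hom.hom.hom) := by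
  have hcomm : V.ρ g ∘ₗ i.hom.hom.hom = i.hom.hom.hom ∘ₗ W.ρ g :=
    (congrArg (fun f => f.hom.hom) (i.comm g)).symm
  have hpi : p.hom.hom.hom ∘ₗ i.hom.hom.hom = LinearMap.id :=
    congrArg (fun f : W ⟶ W => f.hom.hom.hom) h
  rw [← LinearMap.comp_assoc, hcomm, LinearMap.trace_comp_comm', ← LinearMap.comp_assoc, hpi,
    LinearMap.id_comp, FDRep.character]

theorem character_eq_add_of_splitting {S : ShortComplex (FDRep k G)} (s : S.Splitting) :
    S.X₂.character = S.X₁.character + S.X₃.character := by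
  ext g
  have hid : S.f.hom.hom.hom ∘ₗ s.r.hom.hom.hom + s.s.hom.hom.hom ∘ₗ S.g.hom.hom.hom =
      LinearMap.id := congrArg (fun f : S.X₂ ⟶ S.X₂ => f.hom.hom.hom) s.id
  rw [Pi.add_apply, character_eq_trace_of_retract s.f_r, character_eq_trace_of_retract s.s_g,
    ← map_add, ← LinearMap.comp_add, hid, LinearMap.comp_id, FDRep.character]

end Monoid

variable {k G : Type u} [Field k] [Group G] [Finite G]

theorem character_eq_add_cokernel [NeZero (Nat.card G : k)] {V W : FDRep k G} (f : W ⟶ V)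
    [Mono f] : V.character = W.character + (Limits.cokernel f).character :=
  have hS : (ShortComplex.mk f (Limits.cokernel.π f) (Limits.cokernel.condition f)).ShortExact :=
    .mk' (ShortComplex.exact_cokernel f) inferInstance inferInstance
  -- By Maschke's theorem every object of `FDRep k G` is injective.
  character_eq_add_of_splitting hS.splittingOfInjective

theorem character_mem_span_of_forall_simple [CharZero k] {s : Set (G → k)}
    (hs : ∀ V : FDRep k G, Simple V → V.character ∈ Submodule.span k s) (V : FDRep k G) :
    V.character ∈ Submodule.span k s := by
  induction hn : Module.finrank k V using Nat.strong_induction_on generalizing V with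
  | _ n ih =>
    subst hn
    by_cases hV : Limits.IsZero V
    · have : Subsingleton V := Module.finrank_zero_iff.1 (isZero_iff_finrank_eq_zero.1 hV)
      have hzero : V.character = 0 := funext fun g => by
        rw [FDRep.character, Subsingleton.elim (V.ρ g) 0, map_zero, Pi.zero_apply]
      exact hzero ▸ Submodule.zero_mem _
    by_cases hsimple : Simple V
    · exact hs V hsimple
    obtain ⟨W, f, _, hW, hcoker⟩ := exists_nontrivial_mono_of_not_simple hV hsimple
    have hchar := character_eq_add_cokernel f
    have hdim : Module.finrank k V =
        Module.finrank k W + Module.finrank k (Limits.cokernel f : FDRep k G) := by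
      have hone := congrFun hchar 1
      simp only [Pi.add_apply, FDRep.char_one] at hone
      exact_mod_cast hone
    rw [isZero_iff_finrank_eq_zero] at hW hcoker
    rw [hchar]
    exact Submodule.add_mem _ (ih _ (by omega) W rfl) (ih _ (by omega) _ rfl)

end CompleteReducibility

theorem character_leftRegular {k G : Type*} [Field k] [Group G] [Fintype G] [DecidableEq G]
    (g : G) :
    (Representation.leftRegular k G).character g = if g = 1 then (Fintype.card G : k) else 0 := by
  let b : Module.Basis G k (MonoidAlgebra k G) := .ofRepr (MonoidAlgebra.coeffLinearEquiv k)
  have hdiag : ∀ h, b.repr (Representation.leftRegular k G g (b h)) h =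
      if g = 1 then 1 else 0 := by
    intro h
    change (Representation.leftRegular k G g (MonoidAlgebra.single h 1)).coeff h = _
    rw [Representation.ofMulAction_single]
    simp [Finsupp.single_apply]
  rw [Representation.character, LinearMap.trace_eq_matrix_trace k b]
  simp [Matrix.trace, LinearMap.toMatrix_apply, hdiag]

section IrreducibleFamily

theorem sum_character_mul_character_inv {k G ι : Type*} [Field k] [IsAlgClosed k] [Group G]
    [Fintype G] [NeZero (Fintype.card G : k)] [DecidableEq ι] {ρ : ι → FDRep k G}
    (hirr : ∀ i, Simple (ρ i)) (hdist : ∀ i j, i ≠ j → IsEmpty (ρ i ≅ ρ j)) (i j : ι) :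
    (Fintype.card G : k)⁻¹ * ∑ g, (ρ i).character g * (ρ j).character g⁻¹ =
      if i = j then 1 else 0 := by
  classical
  have := hirr i
  have := hirr j
  have hiso : Nonempty (ρ i ≅ ρ j) ↔ i = j :=
    ⟨fun h => by_contra fun hij => (hdist i j hij).elim h.some, fun h => ⟨eqToIso (h ▸ rfl)⟩⟩
  have : Invertible (Nat.card G : k) :=
    invertibleOfNonzero (Nat.card_eq_fintype_card (α := G) ▸ NeZero.ne _)
  simpa only [hiso, Nat.card_eq_fintype_card] using FDRep.char_orthonormal (ρ i) (ρ j)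

section Coefficients

variable {k G ι : Type*} [Field k] [IsAlgClosed k] [Group G] [Fintype G]
  [NeZero (Fintype.card G : k)] [Fintype ι] {ρ : ι → FDRep k G}

theorem sum_sum_mul_character_mul_character_inv (hirr : ∀ i, Simple (ρ i))
    (hdist : ∀ i j, i ≠ j → IsEmpty (ρ i ≅ ρ j)) (m : ι → k) (j : ι) :
    (Fintype.card G : k)⁻¹ * ∑ g, (∑ i, m i * (ρ i).character g) * (ρ j).character g⁻¹ = m j := by
  classical
  calc
    _ = ∑ i, m i * ((Fintype.card G : k)⁻¹ *
          ∑ g, (ρ i).character g * (ρ j).character g⁻¹) := by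
      simp only [Finset.sum_mul, Finset.mul_sum]
      rw [Finset.sum_comm]
      exact Finset.sum_congr rfl fun i _ => Finset.sum_congr rfl fun g _ => by ring
    _ = m j := by simp [sum_character_mul_character_inv hirr hdist]

theorem coeff_eq_mul_finrank_of_forall_ne_one (hirr : ∀ i, Simple (ρ i))
    (hdist : ∀ i j, i ≠ j → IsEmpty (ρ i ≅ ρ j)) {m : ι → k}
    (hm : ∀ g, g ≠ 1 → ∑ i, m i * (ρ i).character g = 0) (j : ι) :
    m j = (Fintype.card G : k)⁻¹ * (∑ i, m i * (ρ i).character 1) * Module.finrank k (ρ j) := by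
  rw [← sum_sum_mul_character_mul_character_inv hirr hdist m j, Finset.sum_eq_single 1
    (fun g _ hg => by rw [hm g hg, zero_mul]) (by simp), inv_one, FDRep.char_one (ρ j), mul_assoc]

end Coefficients

variable {k G : Type u} [Field k] [IsAlgClosed k] [CharZero k] [Group G] [Finite G]
  {ι : Type*} [Fintype ι] {ρ : ι → FDRep k G}

theorem sum_finrank_mul_character (hirr : ∀ i, Simple (ρ i))
    (hdist : ∀ i j, i ≠ j → IsEmpty (ρ i ≅ ρ j))
    (hcomplete : ∀ V : FDRep k G, Simple V → ∃ i, Nonempty (V ≅ ρ i)) (g : G) :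
    ∑ i, (Module.finrank k (ρ i) : k) * (ρ i).character g =
      (Representation.leftRegular k G).character g := by
  classical
  have := Fintype.ofFinite G
  have hspan : (Representation.leftRegular k G).character ∈
      Submodule.span k (Set.range fun i => (ρ i).character) := by
    refine character_mem_span_of_forall_simple (fun V hV => ?_) (.of (.leftRegular k G))
    obtain ⟨i, ⟨e⟩⟩ := hcomplete V hV
    exact FDRep.char_iso e ▸ Submodule.subset_span ⟨i, rfl⟩
  obtain ⟨m, hm⟩ := (Submodule.mem_span_range_iff_exists_fun k).1 hspan
  replace hm : ∀ g, ∑ i, m i * (ρ i).character g =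
      (Representation.leftRegular k G).character g := fun g => by simp [← hm]
  have hm_eq : ∀ j, m j = Module.finrank k (ρ j) := fun j => by
    rw [coeff_eq_mul_finrank_of_forall_ne_one (m := m) hirr hdist
      (fun g hg => by rw [hm, character_leftRegular, if_neg hg]) j, hm, character_leftRegular]
    simp
  simpa only [hm_eq] using hm g

theorem sum_mul_character_eq_zero_iff_exists_eq_mul_finrank (hirr : ∀ i, Simple (ρ i))
    (hdist : ∀ i j, i ≠ j → IsEmpty (ρ i ≅ ρ j))
    (hcomplete : ∀ V : FDRep k G, Simple V → ∃ i, Nonempty (V ≅ ρ i)) (m : ι → k) :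
    (∀ g, g ≠ 1 → ∑ i, m i * (ρ i).character g = 0) ↔
      ∃ r : k, ∀ i, m i = r * Module.finrank k (ρ i) := by
  classical
  have := Fintype.ofFinite G
  refine ⟨fun h => ⟨_, coeff_eq_mul_finrank_of_forall_ne_one hirr hdist h⟩, ?_⟩
  rintro ⟨r, hr⟩ g hg
  simp only [hr, mul_assoc]
  rw [← Finset.mul_sum, sum_finrank_mul_character hirr hdist hcomplete, character_leftRegular,
    if_neg hg, mul_zero]

end IrreducibleFamily

theorem exists_ofReal_eq_mul_natCast_iff {ι : Type*} {x : ι → ℝ} {d : ι → ℕ} :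
    (∃ r : ℂ, ∀ i, (x i : ℂ) = r * d i) ↔ ∃ r : ℝ, ∀ i, x i = r * d i := by
  refine ⟨fun ⟨r, hr⟩ => ⟨r.re, fun i => ?_⟩, fun ⟨r, hr⟩ => ⟨r, fun i => ?_⟩⟩
  · simpa using congrArg Complex.re (hr i)
  · exact_mod_cast hr i

theorem sum_sum_mul_sum_mul_conj {α ι : Type*} [Fintype α] [Fintype ι] (χ : ι → α → ℂ)
    (ψ : α → ℂ) (x : ι → ℝ) :
    ∑ i, ∑ j, (x i * x j : ℂ) * ∑ a, χ i a * ψ a * (starRingEnd ℂ) (χ j a) =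
      ∑ a, ψ a * Complex.normSq (∑ i, x i * χ i a) := by
  have hnormSq : ∀ a, (Complex.normSq (∑ i, x i * χ i a) : ℂ) =
      ∑ i, ∑ j, (x i * χ i a) * (x j * (starRingEnd ℂ) (χ j a)) := fun a => by
    rw [← Complex.mul_conj, map_sum, Finset.sum_mul_sum]
    simp only [map_mul, Complex.conj_ofReal]
  simp only [hnormSq, Finset.mul_sum]
  rw [Finset.sum_congr rfl fun i _ => Finset.sum_comm, Finset.sum_comm]
  exact Finset.sum_congr rfl fun a _ => Finset.sum_congr rfl fun i _ =>
    Finset.sum_congr rfl fun j _ => by ring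

theorem sum_finrank_sub_re_character_mul_eq_zero_iff {G V : Type*} [Group G] [Fintype G]
    [AddCommGroup V] [Module ℂ V] [FiniteDimensional ℂ V] {σ : Representation ℂ G V}
    (hσ : Function.Injective σ) {w : G → ℝ} (hw : ∀ g, 0 ≤ w g) :
    ∑ g, (Module.finrank ℂ V - (σ.character g).re) * w g = 0 ↔ ∀ g, g ≠ 1 → w g = 0 := by
  have hσ_fin (g : G) : IsOfFinOrder (σ g) := σ.isOfFinOrder (isOfFinOrder_of_finite g)
  have hnonneg : ∀ g ∈ Finset.univ, 0 ≤ (Module.finrank ℂ V - (σ.character g).re) * w g :=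
    fun g _ => mul_nonneg (sub_nonneg.2 (re_trace_le_finrank_of_isOfFinOrder (hσ_fin g))) (hw g)
  have hfactor (g : G) : Module.finrank ℂ V - (σ.character g).re = 0 ↔ g = 1 := by
    rw [sub_eq_zero, eq_comm, Representation.character,
      re_trace_eq_finrank_iff_of_isOfFinOrder (hσ_fin g), map_eq_one_iff σ hσ]
  simp only [Finset.sum_eq_zero_iff_of_nonneg hnonneg, Finset.mem_univ, true_imp_iff, mul_eq_zero,
    hfactor, or_iff_not_imp_left, ne_eq]

theorem conj_character {G : Type*} [Group G] [Finite G] (V : FDRep ℂ G) (g : G) :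
    (starRingEnd ℂ) (V.character g) = V.character g⁻¹ :=
  (trace_eq_conj_trace_of_mul_eq_one (V.ρ.isOfFinOrder (isOfFinOrder_of_finite g))
    (by rw [← map_mul, inv_mul_cancel, map_one])).symm

theorem sum_sum_mul_finrank_sub_multiplicity_eq_average {G : Type*} [Group G] [Fintype G]
    {V : Type*} [AddCommGroup V] [Module ℂ V] {σ : Representation ℂ G V}
    {ι : Type*} [Fintype ι] [DecidableEq ι] {ρ : ι → FDRep ℂ G} (hirr : ∀ i, Simple (ρ i))
    (hdist : ∀ i j, i ≠ j → IsEmpty (ρ i ≅ ρ j)) {c : ι → ι → ℕ}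
    (hc : ∀ i j, (c i j : ℂ) = (Fintype.card G : ℂ)⁻¹ *
      ∑ g, (ρ i).character g * σ.character g * (starRingEnd ℂ) ((ρ j).character g))
    (x : ι → ℝ) :
    ∑ i, ∑ j, x i * x j * (Module.finrank ℂ V * (if i = j then 1 else 0) - (c i j : ℝ)) =
      (Fintype.card G : ℝ)⁻¹ * ∑ g, (Module.finrank ℂ V - (σ.character g).re) *
        Complex.normSq (∑ i, x i * (ρ i).character g) := by
  have hcoeff (i j : ι) : (Module.finrank ℂ V * (if i = j then 1 else 0) - c i j : ℂ) =
      (Fintype.card G : ℂ)⁻¹ * ∑ g, (ρ i).character g * (Module.finrank ℂ V - σ.character g) *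
        (starRingEnd ℂ) ((ρ j).character g) := by
    rw [hc, ← sum_character_mul_character_inv hirr hdist, mul_left_comm, ← mul_sub,
      Finset.mul_sum, ← Finset.sum_sub_distrib]
    simp only [conj_character]
    exact congrArg _ (Finset.sum_congr rfl fun g _ => by ring)
  have hform : ((∑ i, ∑ j, x i * x j *
      (Module.finrank ℂ V * (if i = j then 1 else 0) - (c i j : ℝ)) : ℝ) : ℂ) =
      (Fintype.card G : ℂ)⁻¹ * ∑ g, (Module.finrank ℂ V - σ.character g) *
        Complex.normSq (∑ i, x i * (ρ i).character g) := by
    rw [← sum_sum_mul_sum_mul_conj]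
    push_cast
    simp only [Finset.mul_sum (s := (Finset.univ : Finset ι)), apply_ite Complex.ofReal,
      Complex.ofReal_one, Complex.ofReal_zero, hcoeff, mul_left_comm (Fintype.card G : ℂ)⁻¹]
  have hre := congrArg Complex.re hform
  rw [Complex.ofReal_re, ← Complex.ofReal_natCast, ← Complex.ofReal_inv, Complex.re_ofReal_mul,
    Complex.re_sum] at hre
  simpa only [Complex.re_mul_ofReal, Complex.sub_re, Complex.natCast_re] using hre

theorem stmt_4_general {G : Type} [Group G] [Fintype G] {V : Type*} [AddCommGroup V] [Module ℂ V]
    [FiniteDimensional ℂ V] (σ : Representation ℂ G V) (hσ : Function.Injective σ)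
    {ι : Type*} [Fintype ι] [DecidableEq ι]
    (ρ : ι → FDRep ℂ G) (hirr : ∀ i, Simple (ρ i))
    (hdist : ∀ i j, i ≠ j → IsEmpty (ρ i ≅ ρ j))
    (hcomplete : ∀ V : FDRep ℂ G, Simple V → ∃ i, Nonempty (V ≅ ρ i))
    (c : ι → ι → ℕ)
    (hc : ∀ i j, (c i j : ℂ) = (Fintype.card G : ℂ)⁻¹ *
      ∑ g, (ρ i).character g * σ.character g * (starRingEnd ℂ) ((ρ j).character g))
    (x : ι → ℝ) :
    ∑ i, ∑ j, x i * x j * (Module.finrank ℂ V * (if i = j then 1 else 0) - (c i j : ℝ)) = 0 ↔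
      ∃ r : ℝ, ∀ i, x i = r * Module.finrank ℂ (ρ i) := by
  have hcard : (Fintype.card G : ℝ)⁻¹ ≠ 0 := inv_ne_zero (by exact_mod_cast Fintype.card_ne_zero)
  rw [sum_sum_mul_finrank_sub_multiplicity_eq_average hirr hdist hc, mul_eq_zero_iff_left hcard,
    sum_finrank_sub_re_character_mul_eq_zero_iff hσ fun g => Complex.normSq_nonneg _]
  simp only [Complex.normSq_eq_zero]
  rw [sum_mul_character_eq_zero_iff_exists_eq_mul_finrank hirr hdist hcomplete,
    exists_ofReal_eq_mul_natCast_iff]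

section SpecialLinearGroup

variable {n : Type*} [Fintype n] [DecidableEq n]

/-- The standard representation of `SL(n, R)` on `n → R`, by multiplication on column vectors;
it turns a homomorphism into `SL(n, R)` into a representation. -/
def slRepresentation {R : Type*} [CommRing R] :
    Representation R (Matrix.SpecialLinearGroup n R) (n → R) :=
  LinearEquiv.automorphismGroup.toLinearMapMonoidHom.comp Matrix.SpecialLinearGroup.toLin'

theorem slRepresentation_injective {R : Type*} [CommRing R] :
    Function.Injective (slRepresentation (n := n) (R := R)) :=
  LinearEquiv.toLinearMap_injective.comp Matrix.SpecialLinearGroup.toLin'_injective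

theorem character_slRepresentation {k : Type*} [Field k] (A : Matrix.SpecialLinearGroup n k) :
    slRepresentation.character A = Matrix.trace (A : Matrix n n k) :=
  Matrix.trace_toLin'_eq _

end SpecialLinearGroup

/-- In the McKay setting, the quadratic form `Σ_{i,j} x_i x_j (2δ_{ij} − c_{ij})`
vanishes at `x : ι → ℝ` if and only if `x` is a real multiple of the vector of dimensions
`d_i = dim ρ_i` of the irreducible representations of `G`. -/
theorem stmt_4 {G : Type} [Group G] [Fintype G]
    (φ : G →* Matrix.SpecialLinearGroup (Fin 2) ℂ) (hφ : Function.Injective φ)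
    {ι : Type} [Fintype ι] [DecidableEq ι]
    (ρ : ι → FDRep ℂ G) (hirr : ∀ i, Simple (ρ i))
    (hdist : ∀ i j : ι, i ≠ j → IsEmpty (ρ i ≅ ρ j))
    (hcomplete : ∀ V : FDRep ℂ G, Simple V → ∃ i, Nonempty (V ≅ ρ i))
    (c : ι → ι → ℕ)
    (hc : ∀ i j, (c i j : ℂ) = (Fintype.card G : ℂ)⁻¹ *
      ∑ g : G, (ρ i).character g * Matrix.trace (φ g : Matrix (Fin 2) (Fin 2) ℂ) *
        (starRingEnd ℂ) ((ρ j).character g))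
    (x : ι → ℝ) :
    (∑ i, ∑ j, x i * x j * (2 * (if i = j then 1 else 0) - (c i j : ℝ))) = 0 ↔
      ∃ r : ℝ, ∀ i, x i = r * (Module.finrank ℂ (ρ i) : ℝ) := by
  simp only [← character_slRepresentation] at hc
  simpa using stmt_4_general (slRepresentation.comp φ) (slRepresentation_injective.comp hφ) ρ hirr
    hdist hcomplete c hc x
end

section
/- Let G be a finite group and H a normal subgroup of G such that the quotient group G/H is cyclic. Then for every irreducible complex representation ρ of G and every irreducible complex representation τ of H, the multiplicity of τ in the restriction of ρ to H is at most 1 (i.e. the restriction of any irreducible complex representation of G to H is multiplicity-free). -/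
open scoped BigOperators
open CategoryTheory

/-!
Let `p : V → W` be a nonzero `H`-map from the irreducible `G`-representation `ρ` to the irreducible
`H`-representation `τ`, and let `I ≤ G` be the inertia group of `τ`. If `ker p` is stable under `I`,
then `f ↦ p ∘ f` embeds `Hom_H(τ, V)` into `End_H(τ)`, which is one-dimensional: when `p ∘ f = 0`,
also `p ∘ ρ x ∘ f = 0` for all `x`, because `ker p` is `x`-stable if `x ∈ I`, while otherwise
`p ∘ ρ x ∘ f` intertwines the non-isomorphic irreducibles `τˣ` and `τ`; but the intersection of the
translates of `ker p` is a proper `G`-subspace, so `f = 0`.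

Since `G / H` is cyclic, `I` is generated modulo `H` by one element `s`, and an isomorphism
`T : τˢ ≃ τ` turns `p ↦ T ∘ p ∘ ρ s⁻¹` into an invertible operator on `Hom_H(V, τ)`. Any of its
eigenvectors has an `I`-stable kernel. If `Hom_H(τ, V) ≠ 0`, then `V` is the sum of the translates
of a copy of `τ`, so it is semisimple over `H` and `Hom_H(V, τ) ≠ 0` as well.
-/

theorem exists_le_zpowers_sup_of_isCyclic_quotient {G : Type*} [Group G] (H K : Subgroup G)
    [H.Normal] [IsCyclic (G ⧸ H)] : ∃ s ∈ K, K ≤ Subgroup.zpowers s ⊔ H := by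
  obtain ⟨⟨_, s, hs, rfl⟩, hgen⟩ :=
    IsCyclic.exists_generator (α := K.map (QuotientGroup.mk' H))
  refine ⟨s, hs, ?_⟩
  rw [sup_comm, ← QuotientGroup.comap_map_mk', ← Subgroup.map_le_iff_le_comap,
    MonoidHom.map_zpowers]
  intro y hy
  obtain ⟨m, hm⟩ := Subgroup.mem_zpowers_iff.1 (hgen ⟨y, hy⟩)
  exact Subgroup.mem_zpowers_iff.2 ⟨m, congrArg Subtype.val hm⟩

section Conjugate

open Representation

variable {k G V W : Type*} [Field k] [Group G] {H : Subgroup G} [H.Normal]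
  [AddCommGroup V] [Module k V] [AddCommGroup W] [Module k W]

theorem isIrreducible_comp_of_surjective {M N : Type*} [Monoid M] [Monoid N]
    (τ : Representation k N W) [IsIrreducible τ] {φ : M →* N} (hφ : Function.Surjective φ) :
    IsIrreducible (τ.comp φ : Representation k M W) :=
  let e : Subrepresentation (τ.comp φ : Representation k M W) ≃o Subrepresentation τ :=
    { toFun := fun S ↦ ⟨S.toSubmodule, hφ.forall.2 S.apply_mem_toSubmodule⟩
      invFun := fun S ↦ ⟨S.toSubmodule, fun m ↦ S.apply_mem_toSubmodule (φ m)⟩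
      left_inv := fun _ ↦ rfl
      right_inv := fun _ ↦ rfl
      map_rel_iff' := Iff.rfl }
  e.isSimpleOrder

/-- The conjugate `τˣ : h ↦ τ (x⁻¹ h x)` of a representation `τ` of a normal subgroup; the inverse
makes `x ↦ τˣ` a left action. -/
def conjugateRep (x : G) (τ : Representation k H W) : Representation k H W :=
  τ.comp (MulAut.conjNormal x⁻¹ : MulAut H).toMonoidHom

theorem conjugateRep_one (τ : Representation k H W) : conjugateRep 1 τ = τ := by
  ext; simp [conjugateRep]

theorem conjugateRep_mul (x y : G) (τ : Representation k H W) :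
    conjugateRep (x * y) τ = conjugateRep x (conjugateRep y τ) := by
  ext; simp [conjugateRep, mul_inv_rev]

instance isIrreducible_conjugateRep (x : G) (τ : Representation k H W) [IsIrreducible τ] :
    IsIrreducible (conjugateRep x τ) :=
  isIrreducible_comp_of_surjective τ (MulAut.conjNormal x⁻¹ : MulAut H).surjective

/-- Functoriality of conjugation: an isomorphism `τ ≃ σ` read as an isomorphism `τˣ ≃ σˣ`. -/
def conjugateEquiv (x : G) {τ : Representation k H W} {σ : Representation k H V}
    (e : τ.Equiv σ) : (conjugateRep x τ).Equiv (conjugateRep x σ) :=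
  .mk e.toLinearEquiv fun h ↦ e.isIntertwining' (MulAut.conjNormal x⁻¹ h)

/-- The inertia group of a representation `τ` of a normal subgroup `H` of `G`: the stabilizer in `G`
of its isomorphism class. -/
def inertiaSubgroup (τ : Representation k H W) : Subgroup G where
  carrier := {x | Nonempty ((conjugateRep x τ).Equiv τ)}
  one_mem' := by
    rw [Set.mem_ofPred_eq, conjugateRep_one]
    exact ⟨.refl τ⟩
  mul_mem' := by
    rintro x y ⟨ex⟩ ⟨ey⟩
    rw [Set.mem_ofPred_eq, conjugateRep_mul]
    exact ⟨(conjugateEquiv x ey).trans ex⟩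
  inv_mem' := by
    rintro x ⟨e⟩
    have e' := conjugateEquiv x⁻¹ e
    rw [← conjugateRep_mul, inv_mul_cancel, conjugateRep_one] at e'
    exact ⟨e'.symm⟩

/-- The stabilizer in `G` of a subspace of a representation of `G`. -/
def subspaceStabilizer (ρ : Representation k G V) (U : Submodule k V) : Subgroup G where
  carrier := {x | ∀ v, ρ x v ∈ U ↔ v ∈ U}
  one_mem' := by simp
  mul_mem' := by
    intro x y hx hy v
    rw [map_mul, Module.End.mul_apply, hx, hy]
  inv_mem' := by
    intro x hx v
    rw [← hx, self_inv_apply]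

end Conjugate

section Clifford

open Representation

variable {k G V W : Type*} [Field k] [Group G] {H : Subgroup G} [H.Normal]
  [AddCommGroup V] [Module k V] [AddCommGroup W] [Module k W]
  {ρ : Representation k G V} {τ : Representation k H W}

/-- The translate `ρ x ∘ f` of an `H`-map `f : τ → ρ`, as an `H`-map from the conjugate `τˣ`. -/
def translateHom (x : G) (f : IntertwiningMap τ (ρ.comp H.subtype)) :
    IntertwiningMap (conjugateRep x τ) (ρ.comp H.subtype) :=
  (ρ x ∘ₗ f.toLinearMap).intertwiningMap_of_isIntertwiningMap _ _ fun h w ↦ by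
    change ρ x (f (τ (MulAut.conjNormal x⁻¹ h) w)) = ρ h (ρ x (f w))
    rw [f.isIntertwining]
    simp [← Module.End.mul_apply, ← map_mul, mul_assoc]

theorem forall_apply_mem_iff_eq_zero [IsIrreducible ρ] {U : Submodule k V} (hU : U ≠ ⊤) {v : V} :
    (∀ x, ρ x v ∈ U) ↔ v = 0 := by
  let S : Subrepresentation ρ :=
    { toSubmodule := ⨅ x, U.comap (ρ x)
      apply_mem_toSubmodule := fun y v hv ↦ by
        simp only [Submodule.mem_iInf, Submodule.mem_comap] at hv ⊢
        intro x
        simpa only [map_mul, Module.End.mul_apply] using hv (x * y) }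
  have hmem (v : V) : v ∈ S ↔ ∀ x, ρ x v ∈ U := Submodule.mem_iInf _
  have hS : S ≠ ⊤ := fun h ↦ hU <| eq_top_iff.2 fun v _ ↦ by
    have hv : v ∈ S := h ▸ trivial
    simpa using (hmem v).1 hv 1
  rw [← hmem, (eq_bot_or_eq_top S).resolve_right hS]
  rfl

theorem isSemisimpleRepresentation_restrict_of_ne_zero [IsIrreducible ρ] [IsIrreducible τ]
    {f : IntertwiningMap τ (ρ.comp H.subtype)} (hf : f ≠ 0) :
    IsSemisimpleRepresentation (ρ.comp H.subtype : Representation k H V) := by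
  rw [isSemisimpleRepresentation_iff_isSemisimpleModule_asModule]
  let F (x : G) := IntertwiningMap.equivLinearMapAsModule _ _ (translateHom x f)
  refine isSemisimpleModule_of_isSemisimpleModule_submodule'
    (p := fun x ↦ LinearMap.range (F x)) (fun x ↦ IsSemisimpleModule.range (F x)) ?_
  let N := Subrepresentation.ofSubmodule' (⨆ x, LinearMap.range (F x))
  have hmem (x : G) (w : W) : ρ x (f w) ∈ N :=
    Submodule.mem_iSup_of_mem (p := fun x ↦ LinearMap.range (F x)) x ⟨w, rfl⟩
  let S : Subrepresentation ρ :=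
    { toSubmodule := N.toSubmodule
      apply_mem_toSubmodule := fun y v hv ↦ by
        have hmap (x : G) (w : W) : ρ y (ρ x (f w)) ∈ N := by
          simpa only [map_mul, Module.End.mul_apply] using hmem (y * x) w
        exact Submodule.iSup_induction (fun x ↦ LinearMap.range (F x))
          (motive := fun v ↦ v ∈ N.toSubmodule.comap (ρ y)) hv
          (fun x _ ⟨w, hw⟩ ↦ hw ▸ hmap x w) (Submodule.zero_mem _)
          fun _ _ ↦ Submodule.add_mem _ }
  have hS : S ≠ ⊥ := fun h ↦ hf <| IntertwiningMap.ext <| LinearMap.ext fun w ↦ by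
    have hw : f w ∈ N := by simpa using hmem 1 w
    change f w ∈ S at hw
    rwa [h] at hw
  refine eq_top_iff.2 fun v _ ↦ ?_
  have hv : v ∈ S := (eq_bot_or_eq_top S).resolve_left hS ▸ trivial
  exact hv

theorem exists_comp_eq_id [IsIrreducible ρ] [IsIrreducible τ]
    {f : IntertwiningMap τ (ρ.comp H.subtype)} (hf : f ≠ 0) :
    ∃ p : IntertwiningMap (ρ.comp H.subtype) τ, p.comp f = .id τ := by
  have := (isSemisimpleRepresentation_iff_isSemisimpleModule_asModule _).1
    (isSemisimpleRepresentation_restrict_of_ne_zero hf)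
  obtain ⟨p, hp⟩ := IsSemisimpleModule.extension_property
    (IntertwiningMap.equivLinearMapAsModule _ _ f)
    ((IsIrreducible.injective_or_eq_zero f).resolve_right hf) LinearMap.id
  refine ⟨(IntertwiningMap.equivLinearMapAsModule _ _).symm p, ?_⟩
  ext w
  exact LinearMap.congr_fun hp w

theorem eq_zero_of_notMem_inertiaSubgroup [IsIrreducible τ] {x : G}
    (hx : x ∉ inertiaSubgroup τ) (g : IntertwiningMap (conjugateRep x τ) τ) : g = 0 := by
  have : IsEmpty ((conjugateRep x τ).Equiv τ) := not_nonempty_iff.1 hx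
  exact Subsingleton.elim _ _

theorem comp_injective_of_inertiaSubgroup_le [IsIrreducible ρ] [IsIrreducible τ]
    {p : IntertwiningMap (ρ.comp H.subtype) τ} (hp : p ≠ 0)
    (hstab : inertiaSubgroup τ ≤ subspaceStabilizer ρ (LinearMap.ker p.toLinearMap)) :
    Function.Injective (IntertwiningMap.llcomp τ (ρ.comp H.subtype) τ p) := by
  have hker : LinearMap.ker p.toLinearMap ≠ ⊤ := fun h ↦
    hp (IntertwiningMap.ext (LinearMap.ker_eq_top.1 h))
  refine (injective_iff_map_eq_zero _).2 fun f hf ↦ ?_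
  ext w
  refine (forall_apply_mem_iff_eq_zero (ρ := ρ) hker).1 fun x ↦ ?_
  by_cases hx : x ∈ inertiaSubgroup τ
  · exact (hstab hx (f w)).2 (DFunLike.congr_fun hf w)
  · exact DFunLike.congr_fun
      (eq_zero_of_notMem_inertiaSubgroup hx (p.comp (translateHom x f))) w

/-- For an isomorphism `e : τˢ ≃ τ`, the operator `p ↦ e ∘ p ∘ ρ s⁻¹` on the `H`-maps
`p : ρ → τ`. -/
def twistHom {s : G} (e : (conjugateRep s τ).Equiv τ) :
    Module.End k (IntertwiningMap (ρ.comp H.subtype) τ) where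
  toFun p := (e.toLinearMap ∘ₗ p.toLinearMap ∘ₗ ρ s⁻¹).intertwiningMap_of_isIntertwiningMap _ _
    fun h v ↦ by
      have hρ : ρ s⁻¹ (ρ h v) = ρ (MulAut.conjNormal s⁻¹ h : H) (ρ s⁻¹ v) := by
        simp [← Module.End.mul_apply, ← map_mul, mul_assoc]
      change e (p (ρ s⁻¹ (ρ h v))) = τ h (e (p (ρ s⁻¹ v)))
      rw [hρ]
      exact (congrArg e (p.isIntertwining _ _ _ _)).trans (e.isIntertwining _ _ h _)
  map_add' p q := by ext v; exact map_add e _ _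
  map_smul' c p := by ext v; exact map_smul e c _

theorem twistHom_apply {s : G} (e : (conjugateRep s τ).Equiv τ)
    (p : IntertwiningMap (ρ.comp H.subtype) τ) (v : V) : twistHom e p v = e (p (ρ s⁻¹ v)) :=
  rfl

theorem twistHom_injective {s : G} (e : (conjugateRep s τ).Equiv τ) :
    Function.Injective (twistHom (ρ := ρ) e) := by
  refine (injective_iff_map_eq_zero _).2 fun p hp ↦ ?_
  ext v
  have h := DFunLike.congr_fun hp (ρ s v)
  rw [twistHom_apply, inv_self_apply] at h
  exact (map_eq_zero_iff e (EquivLike.injective e)).1 h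

theorem mem_subspaceStabilizer_ker_of_hasEigenvector {s : G} {e : (conjugateRep s τ).Equiv τ}
    {p : IntertwiningMap (ρ.comp H.subtype) τ} {c : k}
    (hp : Module.End.HasEigenvector (twistHom e) c p) :
    s ∈ subspaceStabilizer ρ (LinearMap.ker p.toLinearMap) := by
  have hc : c ≠ 0 := by
    rintro rfl
    exact hp.2 ((map_eq_zero_iff _ (twistHom_injective e)).1 (by simpa using hp.apply_eq_smul))
  intro v
  have h : e (p v) = c • p (ρ s v) := by
    simpa [twistHom_apply] using DFunLike.congr_fun hp.apply_eq_smul (ρ s v)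
  change p (ρ s v) = 0 ↔ p v = 0
  rw [← smul_eq_zero_iff_right hc, ← h, map_eq_zero_iff e (EquivLike.injective e)]

theorem le_subspaceStabilizer_ker {K : Subgroup G} {σ : Representation k K W}
    (p : IntertwiningMap (ρ.comp K.subtype) σ) :
    K ≤ subspaceStabilizer ρ (LinearMap.ker p.toLinearMap) := by
  intro x hx v
  change p (ρ x v) = 0 ↔ p v = 0
  rw [show p (ρ x v) = σ ⟨x, hx⟩ (p v) from p.isIntertwining _ _ ⟨x, hx⟩ v,
    map_eq_zero_iff _ (σ.apply_bijective ⟨x, hx⟩).injective]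

variable [IsAlgClosed k] [FiniteDimensional k V] [FiniteDimensional k W] [IsCyclic (G ⧸ H)]

theorem exists_inertiaSubgroup_le_subspaceStabilizer_ker
    [Nontrivial (IntertwiningMap (ρ.comp H.subtype) τ)] :
    ∃ p : IntertwiningMap (ρ.comp H.subtype) τ, p ≠ 0 ∧
      inertiaSubgroup τ ≤ subspaceStabilizer ρ (LinearMap.ker p.toLinearMap) := by
  obtain ⟨s, ⟨e⟩, hs⟩ := exists_le_zpowers_sup_of_isCyclic_quotient H (inertiaSubgroup τ)
  obtain ⟨c, hc⟩ := Module.End.exists_eigenvalue (twistHom (ρ := ρ) e)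
  obtain ⟨p, hp⟩ := hc.exists_hasEigenvector
  exact ⟨p, hp.2, hs.trans <| sup_le
    (Subgroup.zpowers_le.2 (mem_subspaceStabilizer_ker_of_hasEigenvector hp))
    (le_subspaceStabilizer_ker p)⟩

theorem finrank_intertwiningMap_restrict_le_one (ρ : Representation k G V)
    (τ : Representation k H W) [IsIrreducible ρ] [IsIrreducible τ] :
    Module.finrank k (IntertwiningMap τ (ρ.comp H.subtype)) ≤ 1 := by
  rcases subsingleton_or_nontrivial (IntertwiningMap τ (ρ.comp H.subtype)) with _ | _
  · simp [Module.finrank_zero_of_subsingleton]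
  obtain ⟨f, hf⟩ := exists_ne (0 : IntertwiningMap τ (ρ.comp H.subtype))
  obtain ⟨q, hq⟩ := exists_comp_eq_id hf
  have : Nontrivial (IntertwiningMap (ρ.comp H.subtype) τ) :=
    ⟨q, 0, fun h ↦ hf <| by ext w; simpa [h] using (congrArg f (DFunLike.congr_fun hq w)).symm⟩
  obtain ⟨p, hp, hstab⟩ := exists_inertiaSubgroup_le_subspaceStabilizer_ker (ρ := ρ) (τ := τ)
  rw [← IsIrreducible.finrank_intertwiningMap_self τ]
  exact LinearMap.finrank_le_finrank_of_injective (comp_injective_of_inertiaSubgroup_le hp hstab)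

end Clifford

section Character

open Module

theorem isSemisimple_of_pow_eq_one {k V : Type*} [Field k] [AddCommGroup V] [Module k V]
    {T : End k V} {n : ℕ} (hn : (n : k) ≠ 0) (hT : T ^ n = 1) : T.IsSemisimple :=
  End.isSemisimple_of_squarefree_aeval_eq_zero
    (Polynomial.X_pow_sub_one_separable_iff.2 hn).squarefree (by simp [hT])

theorem trace_eq_map_trace_of_mem_eigenspace {k V : Type*} [Field k] [AddCommGroup V] [Module k V]
    [FiniteDimensional k V] {S T : End k V} (φ : k →+* k) (hT : ⨆ μ, T.eigenspace μ = ⊤)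
    (hS : ∀ μ, ∀ v ∈ T.eigenspace μ, S v = φ μ • v) :
    LinearMap.trace k V S = φ (LinearMap.trace k V T) := by
  classical
  have hinternal := DirectSum.isInternal_submodule_of_iSupIndep_of_iSup_eq_top
    T.eigenspaces_iSupIndep hT
  have hfinite : {μ | T.eigenspace μ ≠ ⊥}.Finite :=
    WellFoundedGT.finite_ne_bot_of_iSupIndep T.eigenspaces_iSupIndep
  have htrace (R : End k V) (c : k → k) (hR : ∀ μ, ∀ v ∈ T.eigenspace μ, R v = c μ • v) :
      LinearMap.trace k V R = ∑ μ ∈ hfinite.toFinset, c μ * finrank k (T.eigenspace μ) := by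
    have hmaps (μ : k) : Set.MapsTo R (T.eigenspace μ) (T.eigenspace μ) := fun v hv ↦ by
      rw [hR μ v hv]
      exact Submodule.smul_mem _ _ hv
    rw [LinearMap.trace_eq_sum_trace_restrict' hinternal hfinite hmaps]
    refine Finset.sum_congr rfl fun μ _ ↦ ?_
    have hrestrict : R.restrict (hmaps μ) = c μ • LinearMap.id := by
      ext v
      exact hR μ v v.2
    rw [hrestrict, map_smul, LinearMap.trace_id, smul_eq_mul]
  rw [htrace S φ hS, htrace T id fun μ v hv ↦ End.mem_eigenspace_iff.1 hv]
  simp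

theorem character_inv_eq_conj {G V : Type*} [Group G] [AddCommGroup V] [Module ℂ V]
    [FiniteDimensional ℂ V] (ρ : Representation ℂ G V) {g : G} (hg : IsOfFinOrder g) :
    ρ.character g⁻¹ = starRingEnd ℂ (ρ.character g) := by
  have hn : orderOf g ≠ 0 := hg.orderOf_pos.ne'
  have hpow : ρ g ^ orderOf g = 1 := by rw [← map_pow, pow_orderOf_eq_one, map_one]
  refine trace_eq_map_trace_of_mem_eigenspace (starRingEnd ℂ)
    (isSemisimple_of_pow_eq_one (mod_cast hn) hpow).iSup_eigenspace_eq_top fun μ v hv ↦ ?_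
  rcases eq_or_ne v 0 with rfl | hv0
  · simp
  have hvec : End.HasEigenvector (ρ g) μ v := ⟨hv, hv0⟩
  have hμ : μ ^ orderOf g = 1 := by
    have h := hvec.pow_apply (orderOf g)
    rw [hpow, End.one_apply] at h
    exact smul_left_injective ℂ hv0 (by simpa using h.symm)
  have hnorm : ‖μ‖ = 1 := Complex.norm_eq_one_of_pow_eq_one hμ hn
  have hμ0 : μ ≠ 0 := norm_ne_zero_iff.1 (by simp [hnorm])
  rw [← Complex.inv_eq_conj hnorm, eq_inv_smul_iff₀ hμ0, ← map_smul, ← hvec.apply_eq_smul,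
    ρ.inv_self_apply]

end Character

theorem isIrreducible_of_simple {k G : Type*} [Field k] [Monoid G] (V : FDRep k G) [Simple V] :
    Representation.IsIrreducible (V.ρ : Representation k G V) := by
  have hbot_or_top (S : Subrepresentation (V.ρ : Representation k G V)) : S = ⊥ ∨ S = ⊤ := by
    let ι : FDRep.of S.toRepresentation ⟶ V :=
      ⟨InducedCategory.homMk (ModuleCat.ofHom S.toSubmodule.subtype), fun _ ↦ rfl⟩
    have : Mono ι := ConcreteCategory.mono_of_injective ι Subtype.val_injective
    by_cases hι : ι = 0
    · left
      ext v
      refine ⟨fun hv ↦ ?_, ?_⟩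
      · have : ι ⟨v, hv⟩ = 0 := by rw [hι]; rfl
        exact this
      · rintro rfl
        exact S.toSubmodule.zero_mem
    · right
      have : IsIso ι := isIso_of_mono_of_nonzero hι
      ext v
      obtain ⟨w, rfl⟩ := (ConcreteCategory.bijective_of_isIso ι).2 v
      exact ⟨fun _ ↦ trivial, fun _ ↦ w.2⟩
  have hne : (⊥ : Subrepresentation (V.ρ : Representation k G V)) ≠ ⊤ := fun h ↦ by
    refine id_nonzero V ?_
    ext v
    have hv : v ∈ (⊤ : Subrepresentation (V.ρ : Representation k G V)) := trivial
    rwa [← h] at hv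
  exact { exists_pair_ne := ⟨_, _, hne⟩, eq_bot_or_eq_top := hbot_or_top }

theorem stmt_6_general {G : Type*} [Group G] (H : Subgroup G) [Fintype H] [H.Normal]
    [IsCyclic (G ⧸ H)] (ρ : FDRep ℂ G) [Simple ρ] (τ : FDRep ℂ H) [Simple τ] :
    ∃ n : ℕ, n ≤ 1 ∧
      (Nat.card H : ℂ)⁻¹ * ∑ h : H, ρ.character (h : G) * (starRingEnd ℂ) (τ.character h)
        = (n : ℂ) := by
  have := isIrreducible_of_simple ρ
  have := isIrreducible_of_simple τ
  let _ : Invertible (Nat.card H : ℂ) := invertibleOfNonzero (mod_cast Nat.card_pos.ne')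
  refine ⟨_, finrank_intertwiningMap_restrict_le_one (H := H) ρ.ρ τ.ρ, ?_⟩
  rw [← Representation.card_inv_mul_sum_char_mul_char_eq_finrank]
  refine congrArg _ (Finset.sum_congr rfl fun h _ ↦ congrArg _ ?_)
  exact (character_inv_eq_conj τ.ρ (isOfFinOrder_of_finite h)).symm

/-- If `H` is a normal subgroup of a finite group `G` with cyclic quotient
`G/H`, then for every irreducible complex representation `ρ` of `G` and every irreducible
complex representation `τ` of `H`, the multiplicity of `τ` in the restriction of `ρ` to `H`
(computed as the character inner product `|H|⁻¹ Σ_{h∈H} χ_ρ(h) conj(χ_τ(h))`) is at most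
`1`. -/
theorem stmt_6 {G : Type} [Group G] [Fintype G]
    (H : Subgroup G) [Fintype H] (hH : H.Normal) (hcyc : IsCyclic (G ⧸ H))
    (ρ : FDRep ℂ G) (hρ : Simple ρ)
    (τ : FDRep ℂ H) (hτ : Simple τ) :
    ∃ n : ℕ, n ≤ 1 ∧
      (Nat.card H : ℂ)⁻¹ * ∑ h : H, ρ.character (h : G) * (starRingEnd ℂ) (τ.character h)
        = (n : ℂ) :=
  stmt_6_general H ρ τ
end
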